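/- Let n, N ≥ 1, let x ∈ {0,1,…,N−1}^n and σ a permutation of {1,…,n}, and let w⁰ := x, w^i := w^{i−1} + e^{σ(i)} (i = 1,…,n) be the vertices of a cell of Kuhn's triangulation of [0,N]^n. Let π be a permutation of {1,…,n} such that every w^i lies in the large simplex NΔ̂_π, and for each k let α^k = (α^k_0,…,α^k_n) be the (unique) barycentric coordinates of w^k with respect to the vertices v⁰_π,…,v^n_π of NΔ̂_π, i.e. α^k_i ≥ 0, Σ_{i=0}^n α^k_i = 1 and w^k = Σ_{i=0}^n α^k_i v^i_π. Then ‖α^k − α^l‖₁ ≤ (n+1)/N for all k, l ∈ {0,…,n}. -/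

import Mathlib

/-!
Abel summation turns barycentric coordinates into plain coordinates. With the tail sums
`T^k_m = ∑_{i ≥ m} α^k_i` one has `T^k_0 = 1`, `T^k_{n+1} = 0` and, by the shape of the vertices
`v^i_π`, `N · T^k_m = w^k_{π(m)}` for `1 ≤ m ≤ n` (`mul_tailSum_succ`). Along a cell each coordinate
increases exactly once, by `1` (`cellVertex_eq`), so for `l ≤ k` every difference
`D_m = T^k_m - T^l_m` lies in `[0, 1/N]` (`tailSum_sub_mem`). Hence
`|α^k_i - α^l_i| = |D_i - D_{i+1}| ≤ 1/N`, and summing over the `n + 1` indices gives the bound.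
-/

/-- The vertices `w⁰ = x`, `w^{i+1} = w^i + e^{σ(i+1)}` of the cell of Kuhn's triangulation
determined by the corner `x` and the permutation `σ` (indices 0-based). -/
def cellVertex {n : ℕ} (x : Fin n → ℕ) (σ : Equiv.Perm (Fin n)) : ℕ → Fin n → ℕ
  | 0 => x
  | (i + 1) => fun j =>
      cellVertex x σ i j + if h : i < n then (if σ ⟨i, h⟩ = j then 1 else 0) else 0

/-- The values of `y` read in the order given by the permutation `π` (0-based), extended by
`0` beyond index `n`. -/
def seqOf {n : ℕ} (π : Equiv.Perm (Fin n)) (y : Fin n → ℝ) : ℕ → ℝ :=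
  fun j => if h : j < n then y (π ⟨j, h⟩) else 0

/-- The large simplex `NΔ̂_π = {y ∈ [0,N]^n : y_{π(1)} ≥ y_{π(2)} ≥ ⋯ ≥ y_{π(n)}}`. -/
def NDeltaHat (n N : ℕ) (π : Equiv.Perm (Fin n)) : Set (Fin n → ℝ) :=
  {y | (∀ j, 0 ≤ y j ∧ y j ≤ (N : ℝ)) ∧ ∀ j, j + 1 < n → seqOf π y (j + 1) ≤ seqOf π y j}

/-- The `i`-th vertex `v^i_π = N·(e^{π(1)} + ⋯ + e^{π(i)})` of the large simplex `NΔ̂_π`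
(so `v⁰_π = 0`), with `i` ranging over `{0, …, n}`. -/
def largeVertex (n N : ℕ) (π : Equiv.Perm (Fin n)) (i : ℕ) : Fin n → ℝ :=
  fun j => if (π.symm j : ℕ) < i then (N : ℝ) else 0

/-- The coordinate `j` has been incremented in `w^k` exactly when `σ⁻¹ j` (0-based) is below `k`. -/
lemma cellVertex_eq {n : ℕ} (x : Fin n → ℕ) (σ : Equiv.Perm (Fin n)) (k : ℕ) (j : Fin n) :
    cellVertex x σ k j = x j + if (σ.symm j : ℕ) < k then 1 else 0 := by
  induction k with
  | zero => simp [cellVertex]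
  | succ k ih =>
    have key : (if h : k < n then (if σ ⟨k, h⟩ = j then 1 else 0) else 0)
        = if (σ.symm j : ℕ) = k then 1 else 0 := by
      have hj := (σ.symm j).isLt
      by_cases h : k < n
      · have : σ ⟨k, h⟩ = j ↔ (σ.symm j : ℕ) = k := by
          rw [← Equiv.eq_symm_apply, Fin.ext_iff]
          exact eq_comm
        simp [h, this]
      · rw [dif_neg h, if_neg (by omega)]
    simp only [cellVertex, ih, key]
    split_ifs <;> omega

/-- The tail sum `∑_{i ≥ m} a_i`, for an arbitrary natural number `m`. -/
def tailSum {n : ℕ} (a : Fin (n + 1) → ℝ) (m : ℕ) : ℝ :=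
  ∑ i : Fin (n + 1), if m ≤ i.val then a i else 0

lemma tailSum_zero {n : ℕ} (a : Fin (n + 1) → ℝ) : tailSum a 0 = ∑ i, a i := by
  simp [tailSum]

lemma tailSum_of_lt {n : ℕ} (a : Fin (n + 1) → ℝ) {m : ℕ} (hm : n < m) : tailSum a m = 0 := by
  refine Finset.sum_eq_zero fun i _ => if_neg ?_
  have := i.isLt
  omega

lemma tailSum_sub_succ {n : ℕ} (a : Fin (n + 1) → ℝ) (i : Fin (n + 1)) :
    tailSum a i.val - tailSum a (i.val + 1) = a i := by
  unfold tailSum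
  rw [← Finset.sum_sub_distrib, Finset.sum_eq_single i]
  · simp
  · intro b _ hb
    have hb' : b.val ≠ i.val := fun h => hb (Fin.ext h)
    by_cases h : i.val ≤ b.val
    · rw [if_pos h, if_pos (by omega), sub_self]
    · rw [if_neg h, if_neg (by omega), sub_self]
  · simp

/-- The vertex `v^i_π` has coordinate `N` in direction `π m` (`m` 0-based) iff `m + 1 ≤ i`, so this
coordinate of a combination of the vertices is `N` times a tail sum. -/
lemma mul_tailSum_succ {n : ℕ} (N : ℕ) (π : Equiv.Perm (Fin n)) (a : Fin (n + 1) → ℝ)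
    (m : Fin n) :
    N * tailSum a (m.val + 1) = ∑ i : Fin (n + 1), a i * largeVertex n N π i.val (π m) := by
  simp only [tailSum, largeVertex, Finset.mul_sum, Equiv.symm_apply_apply, Nat.succ_le_iff]
  refine Finset.sum_congr rfl fun i _ => ?_
  split_ifs <;> ring

lemma tailSum_sub_mem {n N : ℕ} (hN : 1 ≤ N) (x : Fin n → ℕ) (σ π : Equiv.Perm (Fin n))
    {k l : ℕ} (hlk : l ≤ k) (a b : Fin (n + 1) → ℝ)
    (ha : ∑ i, a i = 1) (hb : ∑ i, b i = 1)
    (hka : ∀ j, (cellVertex x σ k j : ℝ) = ∑ i : Fin (n + 1), a i * largeVertex n N π i.val j)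
    (hlb : ∀ j, (cellVertex x σ l j : ℝ) = ∑ i : Fin (n + 1), b i * largeVertex n N π i.val j)
    (m : ℕ) : tailSum a m - tailSum b m ∈ Set.Icc (0 : ℝ) (1 / N) := by
  have hN' : (0 : ℝ) < N := by exact_mod_cast hN
  have h1N : (0 : ℝ) ≤ 1 / N := by positivity
  rcases m with _ | m
  · simp [tailSum_zero, ha, hb]
  by_cases hm : m < n
  · have hka' := hka (π ⟨m, hm⟩)
    have hlb' := hlb (π ⟨m, hm⟩)
    rw [← mul_tailSum_succ, cellVertex_eq] at hka' hlb'
    have hdiff : (tailSum a (m + 1) - tailSum b (m + 1)) * N ∈ Set.Icc (0 : ℝ) 1 := by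
      push_cast at hka' hlb'
      rw [sub_mul, mul_comm _ (N : ℝ), mul_comm _ (N : ℝ), ← hka', ← hlb', Set.mem_Icc]
      split_ifs <;> first | omega | (constructor <;> linarith)
    exact ⟨nonneg_of_mul_nonneg_left hdiff.1 hN', (le_div_iff₀ hN').2 hdiff.2⟩
  · rw [tailSum_of_lt a (by omega), tailSum_of_lt b (by omega)]
    simp

/-- If all the vertices `w⁰, …, w^n` of a cell of Kuhn's triangulation of `[0,N]^n` lie in a
large simplex `NΔ̂_π`, with barycentric coordinates `α^0, …, α^n` with respect to the
vertices of `NΔ̂_π`, then `‖α^k − α^l‖₁ ≤ (n+1)/N` for all `k, l`. -/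
theorem barycentric_coordinates_close (n N : ℕ) (hn : 1 ≤ n) (hN : 1 ≤ N)
    (x : Fin n → ℕ) (hx : ∀ j, x j ≤ N - 1) (σ π : Equiv.Perm (Fin n))
    (hcell : ∀ k : Fin (n + 1), (fun j => (cellVertex x σ k.val j : ℝ)) ∈ NDeltaHat n N π)
    (α : Fin (n + 1) → Fin (n + 1) → ℝ)
    (hnn : ∀ k i, 0 ≤ α k i) (hsum : ∀ k, ∑ i : Fin (n + 1), α k i = 1)
    (hbary : ∀ (k : Fin (n + 1)) (j : Fin n),
      (cellVertex x σ k.val j : ℝ) = ∑ i : Fin (n + 1), α k i * largeVertex n N π i.val j) :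
    ∀ k l : Fin (n + 1), ∑ i : Fin (n + 1), |α k i - α l i| ≤ ((n : ℝ) + 1) / N := by
  intro k l
  -- The bound is symmetric in `k` and `l`.
  wlog hlk : l.val ≤ k.val generalizing k l
  · simpa only [abs_sub_comm] using this l k (by omega)
  have hD := tailSum_sub_mem hN x σ π hlk (α k) (α l) (hsum k) (hsum l) (hbary k) (hbary l)
  have hterm : ∀ i, |α k i - α l i| ≤ 1 / (N : ℝ) := by
    intro i
    have h1 := hD i.val
    have h2 := hD (i.val + 1)
    rw [Set.mem_Icc] at h1 h2
    rw [← tailSum_sub_succ (α k) i, ← tailSum_sub_succ (α l) i, abs_le]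
    constructor <;> linarith
  calc ∑ i : Fin (n + 1), |α k i - α l i|
      ≤ ∑ _i : Fin (n + 1), 1 / (N : ℝ) := Finset.sum_le_sum fun i _ => hterm i
    _ = ((n : ℝ) + 1) / N := by
      simp [div_eq_mul_inv]
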